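/- arXiv:1112.1149 — 6 statements merged into one kernel-verified Lean document; each statement's English description precedes it below -/
import Mathlib

section
/- Let a, b be real numbers with 0 < a ≤ b and let y ≥ 0 be a real number. Then R(a,b)(y) ≥ y²/(2ab) + y/(2a). -/
/-!
Slice the triangle by the rows `n = 0, …, N` with `N = ⌊y / b⌋`. Row `n` holds
`⌊(y - b n) / a⌋ + 1 ≥ (y - b n) / a` lattice points (`latticeCount_eq_sum`). Summing this
arithmetic progression and writing `y = b N + t` with `0 ≤ t < b`, the lower bound so obtained
exceeds `y² / (2ab) + y / (2a)` by exactly `t (b - t) / (2ab) ≥ 0`.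
-/

/-- `latticeCount a b y` is the number of pairs `(m, n)` of nonnegative integers
with `a * m + b * n ≤ y`. -/
noncomputable def latticeCount (a b y : ℝ) : ℕ :=
  Set.ncard {p : ℕ × ℕ | a * p.1 + b * p.2 ≤ y}

theorem latticeCount_eq_sum (a b y : ℝ) (ha : 0 < a) (hb : 0 < b) (hy : 0 ≤ y) :
    latticeCount a b y =
      ∑ n ∈ Finset.range (⌊y / b⌋₊ + 1), (⌊(y - b * n) / a⌋₊ + 1) := by
  have key : {p : ℕ × ℕ | a * p.1 + b * p.2 ≤ y} =
      ↑(((Finset.range (⌊y / b⌋₊ + 1)).sigma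
        (fun n : ℕ => Finset.range (⌊(y - b * n) / a⌋₊ + 1))).image
          (fun q : (_ : ℕ) × ℕ => (q.2, q.1))) := by
    ext ⟨m, n⟩
    have hn : n < ⌊y / b⌋₊ + 1 ↔ b * n ≤ y := by
      rw [Nat.lt_succ_iff, Nat.le_floor_iff (by positivity), le_div_iff₀ hb, mul_comm]
    -- Nonnegativity of `y - b * n` is needed: the natural floor of a negative real is `0`.
    have hm : b * n ≤ y → (m < ⌊(y - b * n) / a⌋₊ + 1 ↔ a * m + b * n ≤ y) := by
      intro h
      rw [Nat.lt_succ_iff, Nat.le_floor_iff (div_nonneg (by linarith) ha.le), le_div_iff₀ ha,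
        mul_comm, le_sub_iff_add_le]
    have h0 : 0 ≤ a * (m : ℝ) := by positivity
    simp only [Set.mem_ofPred_eq, Finset.coe_image, Set.mem_image, Finset.mem_coe,
      Finset.mem_sigma, Finset.mem_range, Prod.mk.injEq]
    constructor
    · intro h
      have h1 : b * n ≤ y := by linarith
      exact ⟨⟨n, m⟩, ⟨hn.2 h1, (hm h1).2 h⟩, rfl, rfl⟩
    · rintro ⟨⟨n', m'⟩, ⟨h1, h2⟩, rfl, rfl⟩
      exact (hm (hn.1 h1)).1 h2
  rw [latticeCount, key, Set.ncard_coe_finset, Finset.card_image_of_injective, Finset.card_sigma]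
  · simp
  · rintro ⟨n, m⟩ ⟨n', m'⟩ h
    simp only [Prod.mk.injEq] at h
    obtain ⟨rfl, rfl⟩ := h
    rfl

theorem sum_rows (a b y : ℝ) (N : ℕ) :
    ∑ n ∈ Finset.range (N + 1), (y - b * n) / a = ((N + 1) * y - b * N * (N + 1) / 2) / a := by
  induction N with
  | zero => simp
  | succ k ih => rw [Finset.sum_range_succ, ih]; push_cast; ring

theorem stmt_0 (a b y : ℝ) (ha : 0 < a) (hab : a ≤ b) (hy : 0 ≤ y) :
    (latticeCount a b y : ℝ) ≥ y ^ 2 / (2 * a * b) + y / (2 * a) := by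
  have hb : 0 < b := ha.trans_le hab
  rw [latticeCount_eq_sum a b y ha hb hy]
  push_cast
  have h1 : ∑ n ∈ Finset.range (⌊y / b⌋₊ + 1), (y - b * n) / a ≤
      ∑ n ∈ Finset.range (⌊y / b⌋₊ + 1), ((⌊(y - b * n) / a⌋₊ : ℝ) + 1) :=
    Finset.sum_le_sum fun n _ => (Nat.lt_floor_add_one _).le
  rw [sum_rows] at h1
  refine le_trans ?_ h1
  have h2 : (⌊y / b⌋₊ : ℝ) * b ≤ y := (le_div_iff₀ hb).1 (Nat.floor_le (by positivity))
  have h3 : y < (⌊y / b⌋₊ + 1 : ℝ) * b := (div_lt_iff₀ hb).1 (Nat.lt_floor_add_one _)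
  generalize (⌊y / b⌋₊ : ℝ) = N at h2 h3 ⊢
  have h4 : 0 ≤ (y - N * b) * ((N + 1) * b - y) / (2 * a * b) :=
    div_nonneg (mul_nonneg (by linarith) (by linarith)) (by positivity)
  have h5 : ((N + 1) * y - b * N * (N + 1) / 2) / a - (y ^ 2 / (2 * a * b) + y / (2 * a)) =
      (y - N * b) * ((N + 1) * b - y) / (2 * a * b) := by
    field_simp
    ring
  linarith
end

section
/- Let a, b be real numbers with 0 < a ≤ b and let y ≥ 0 be a real number. Then R(a,b)(y) ≤ y²/(2ab) + y/(2a) + y/b + b/(8a) + 1. -/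
theorem sum_row_bound (a b y : ℝ) (N : ℕ) :
    ∑ n ∈ Finset.range (N + 1), ((y - b * n) / a + 1)
      = (N + 1) * (y / a + 1) - b / a * (N * (N + 1) / 2) := by
  induction N with
  | zero => simp
  | succ k ih =>
    rw [Finset.sum_range_succ, ih]
    push_cast
    ring

theorem latticeCount_le_sum (a b y : ℝ) (ha : 0 < a) (hb : 0 < b) :
    latticeCount a b y
      ≤ ∑ n ∈ Finset.range (⌊y / b⌋₊ + 1), (⌊(y - b * n) / a⌋₊ + 1) := by
  set F : Finset (ℕ × ℕ) := (Finset.range (⌊y / b⌋₊ + 1)).biUnion fun n =>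
    (Finset.range (⌊(y - b * n) / a⌋₊ + 1)).image fun m => (m, n) with hF
  have hsub : {p : ℕ × ℕ | a * p.1 + b * p.2 ≤ y} ⊆ (F : Set (ℕ × ℕ)) := by
    rintro ⟨m, n⟩ h
    simp only [Set.mem_ofPred_eq] at h
    have hm : 0 ≤ a * (m : ℝ) := by positivity
    have hn : n ≤ ⌊y / b⌋₊ := Nat.le_floor (by rw [le_div_iff₀ hb]; linarith)
    have hm' : m ≤ ⌊(y - b * n) / a⌋₊ := Nat.le_floor (by rw [le_div_iff₀ ha]; linarith)
    simp only [hF, Finset.mem_coe, Finset.mem_biUnion, Finset.mem_image, Finset.mem_range]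
    exact ⟨n, by omega, m, by omega, rfl⟩
  calc latticeCount a b y ≤ (F : Set (ℕ × ℕ)).ncard :=
        Set.ncard_le_ncard hsub F.finite_toSet
    _ = F.card := Set.ncard_coe_finset F
    _ ≤ _ := Finset.card_biUnion_le.trans <| Finset.sum_le_sum fun n _ =>
        Finset.card_image_le.trans (Finset.card_range _).le

theorem stmt_1 (a b y : ℝ) (ha : 0 < a) (hab : a ≤ b) (hy : 0 ≤ y) :
    (latticeCount a b y : ℝ) ≤ y ^ 2 / (2 * a * b) + y / (2 * a) + y / b + b / (8 * a) + 1 := by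
  have hb : 0 < b := ha.trans_le hab
  have hN : (⌊y / b⌋₊ : ℝ) ≤ y / b := Nat.floor_le (by positivity)
  have h1 : (latticeCount a b y : ℝ)
      ≤ ∑ n ∈ Finset.range (⌊y / b⌋₊ + 1), ((y - b * n) / a + 1) := by
    refine (Nat.cast_le.mpr (latticeCount_le_sum a b y ha hb)).trans ?_
    push_cast
    refine Finset.sum_le_sum fun n hn => ?_
    have hn' : (n : ℝ) ≤ ⌊y / b⌋₊ := by
      exact_mod_cast Nat.lt_succ_iff.mp (Finset.mem_range.mp hn)
    have hny : (n : ℝ) * b ≤ y := (le_div_iff₀ hb).mp (hn'.trans hN)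
    have h0 : 0 ≤ (y - b * n) / a := div_nonneg (by linarith) ha.le
    linarith [Nat.floor_le h0]
  rw [sum_row_bound] at h1
  generalize (⌊y / b⌋₊ : ℝ) = N at h1 hN
  have key : y ^ 2 / (2 * a * b) + y / (2 * a) + y / b + b / (8 * a) + 1
      - ((N + 1) * (y / a + 1) - b / a * (N * (N + 1) / 2))
      = b / a * (y / b - N - 1 / 2) ^ 2 / 2 + (y / b - N) := by
    field_simp
    ring
  have h2 : 0 ≤ b / a * (y / b - N - 1 / 2) ^ 2 / 2 := by positivity
  linarith
end

section
/- Let β ≥ 1 and α ≥ (5β+16)²/(16β) be real numbers, and set c = √(α/β). Then for every real y ≥ 0, R(1,α)(y) ≥ R(c, cβ)(y). -/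
/-- Counting the lattice points of the triangle row by row. -/
lemma latticeCount_one_eq_sum {b y : ℝ} (hb : 0 < b) (hy : 0 ≤ y) :
    latticeCount 1 b y = ∑ n ∈ Finset.range (⌊y / b⌋₊ + 1), (⌊y - b * n⌋₊ + 1) := by
  have hset : {p : ℕ × ℕ | 1 * (p.1 : ℝ) + b * p.2 ≤ y} =
      (fun q : (_ : ℕ) × ℕ => (q.2, q.1)) ''
        ((Finset.range (⌊y / b⌋₊ + 1)).sigma
          fun n => Finset.range (⌊y - b * n⌋₊ + 1) : Finset ((_ : ℕ) × ℕ)) := by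
    ext ⟨m, n⟩
    simp only [Set.mem_ofPred_eq, Set.mem_image, Finset.mem_coe, Finset.mem_sigma,
      Finset.mem_range, Prod.mk.injEq]
    have key : ∀ m n : ℕ, 1 * (m : ℝ) + b * n ≤ y ↔
        n < ⌊y / b⌋₊ + 1 ∧ m < ⌊y - b * n⌋₊ + 1 := by
      intro m n
      have hm : (0 : ℝ) ≤ m := m.cast_nonneg
      rw [Nat.lt_succ_iff, Nat.lt_succ_iff, Nat.le_floor_iff (by positivity), le_div_iff₀ hb]
      constructor
      · intro h
        exact ⟨by linarith, Nat.le_floor (by linarith)⟩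
      · rintro ⟨h1, h2⟩
        rw [Nat.le_floor_iff (by linarith)] at h2
        linarith
    constructor
    · intro h
      exact ⟨⟨n, m⟩, (key m n).1 h, rfl, rfl⟩
    · rintro ⟨⟨n', m'⟩, h, rfl, rfl⟩
      exact (key _ _).2 h
  rw [latticeCount, hset, Set.ncard_image_of_injective, Set.ncard_coe_finset, Finset.card_sigma]
  · simp
  · rintro ⟨a, b⟩ ⟨c, d⟩ h
    simp only [Prod.mk.injEq] at h
    obtain ⟨rfl, rfl⟩ := h
    rfl

lemma sum_range_affine (b y : ℝ) (N : ℕ) :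
    ∑ n ∈ Finset.range N, (y - b * n) = N * y - b * (N * (N - 1) / 2) := by
  induction N with
  | zero => simp
  | succ k ih =>
    rw [Finset.sum_range_succ, ih]
    push_cast
    ring

lemma le_latticeCount_one {b z : ℝ} (hb : 0 < b) (hz : 0 ≤ z) :
    b / 2 * (z ^ 2 + z) ≤ latticeCount 1 b (b * z) := by
  rw [latticeCount_one_eq_sum hb (by positivity), mul_div_cancel_left₀ _ hb.ne']
  have h1 : ∑ n ∈ Finset.range (⌊z⌋₊ + 1), (b * z - b * n) ≤
      ∑ n ∈ Finset.range (⌊z⌋₊ + 1), ((⌊b * z - b * n⌋₊ : ℝ) + 1) :=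
    Finset.sum_le_sum fun n _ => (Nat.lt_floor_add_one _).le
  rw [sum_range_affine] at h1
  push_cast at h1 ⊢
  have h2 := Nat.floor_le hz
  have h3 := Nat.lt_floor_add_one z
  refine le_trans ?_ h1
  -- With `g` the fractional part of `z`, the excess over the area terms is `b / 2 * (g * (1 - g))`.
  have h4 : 0 ≤ b * ((z - ⌊z⌋₊) * (⌊z⌋₊ + 1 - z)) :=
    mul_nonneg hb.le (mul_nonneg (by linarith) (by linarith))
  linarith

lemma latticeCount_one_le {b x : ℝ} (hb : 0 < b) (hx : 0 ≤ x) :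
    (latticeCount 1 b (b * x) : ℝ) ≤ b / 2 * (x ^ 2 + x) + x + 1 + b / 8 := by
  rw [latticeCount_one_eq_sum hb (by positivity), mul_div_cancel_left₀ _ hb.ne']
  have h2 := Nat.floor_le hx
  have h1 : ∑ n ∈ Finset.range (⌊x⌋₊ + 1), ((⌊b * x - b * n⌋₊ : ℝ) + 1) ≤
      ∑ n ∈ Finset.range (⌊x⌋₊ + 1), ((b * x + 1) - b * n) := by
    refine Finset.sum_le_sum fun n hn => ?_
    have hn' : (n : ℝ) ≤ ⌊x⌋₊ := by
      exact_mod_cast Nat.lt_succ_iff.1 (Finset.mem_range.1 hn)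
    have hnx : b * n ≤ b * x := mul_le_mul_of_nonneg_left (hn'.trans h2) hb.le
    linarith [Nat.floor_le (sub_nonneg.2 hnx)]
  rw [sum_range_affine] at h1
  push_cast at h1 ⊢
  refine h1.trans ?_
  -- The fractional part `f` of `x` satisfies `f * (1 - f) ≤ 1 / 4`.
  have h4 : 0 ≤ b * (x - ⌊x⌋₊ - 1 / 2) ^ 2 := by positivity
  linarith

theorem stmt_2 (α β c : ℝ) (hβ : 1 ≤ β) (hα : (5 * β + 16) ^ 2 / (16 * β) ≤ α)
    (hc : c = Real.sqrt (α / β)) :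
    ∀ y : ℝ, 0 ≤ y → latticeCount 1 α y ≥ latticeCount c (c * β) y := by
  intro y hy
  have hβ0 : 0 < β := by linarith
  have hα0 : 0 < α := lt_of_lt_of_le (by positivity) hα
  have hc0 : 0 < c := hc ▸ Real.sqrt_pos.2 (by positivity)
  have hαc : α = c ^ 2 * β := by
    rw [hc, Real.sq_sqrt (by positivity)]
    field_simp
  have hcβ : 5 * β / 4 + 4 ≤ c * β := by
    rw [div_le_iff₀ (by positivity), hαc] at hα
    have : 5 * β + 16 ≤ 4 * (c * β) :=
      le_of_sq_le_sq (by nlinarith) (by positivity)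
    linarith
  have hc1 : 1 ≤ c := by
    by_contra! h
    nlinarith
  obtain ⟨x, rfl⟩ : ∃ x, y = c * (β * x) := ⟨y / (c * β), by field_simp⟩
  have hx : 0 ≤ x := by
    by_contra! h
    have : c * (β * x) < 0 := mul_neg_of_pos_of_neg hc0 (mul_neg_of_pos_of_neg hβ0 h)
    linarith
  have hscale : latticeCount c (c * β) (c * (β * x)) = latticeCount 1 β (β * x) := by
    have : ∀ p : ℕ × ℕ, c * (p.1 : ℝ) + c * β * p.2 ≤ c * (β * x) ↔
        1 * (p.1 : ℝ) + β * p.2 ≤ β * x := fun p => by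
      rw [← mul_le_mul_iff_right₀ hc0 (b := 1 * (p.1 : ℝ) + β * p.2)]
      ring_nf
    simp only [latticeCount, this]
  rw [hscale, ge_iff_le]
  rcases lt_or_ge x 1 with hx1 | hx1
  · rw [latticeCount_one_eq_sum hβ0 (by positivity), latticeCount_one_eq_sum hα0 hy,
      mul_div_cancel_left₀ _ hβ0.ne', Nat.floor_eq_zero.2 hx1, Finset.sum_range_succ',
      Finset.sum_range_succ']
    have hle : β * x ≤ c * (β * x) := le_mul_of_one_le_left (by positivity) hc1
    have := Nat.floor_mono hle
    simp only [Finset.sum_range_zero, Nat.cast_zero, mul_zero, sub_zero]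
    omega
  · have hlow := le_latticeCount_one hα0 (z := x / c) (by positivity)
    have hup := latticeCount_one_le hβ0 hx
    have e1 : α * (x / c) = c * (β * x) := by
      rw [hαc]
      field_simp
    have e2 : α / 2 * ((x / c) ^ 2 + x / c) = β / 2 * x ^ 2 + c * β * x / 2 := by
      rw [hαc]
      field_simp
    rw [e1, e2] at hlow
    have hgap : 0 ≤ x * (c * β - (5 * β / 4 + 4)) := mul_nonneg hx (by linarith)
    have hfin : 0 ≤ (x - 1) * (1 + β / 8) := mul_nonneg (by linarith) (by positivity)
    have : (latticeCount 1 β (β * x) : ℝ) ≤ latticeCount 1 α (c * (β * x)) := by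
      linarith
    exact_mod_cast this
end

section
/- Let β ≥ 1 and α ≥ (5β+16)²/(16β) be real numbers and set c = √(α/β). Then for every real y ≥ cβ, y²/(2α) + y/2 ≥ y²/(2c²β) + y/(2c) + y/(cβ) + (cβ)/(8c) + 1. -/
/-!
Since `α = c ^ 2 * β`, the quadratic terms on the two sides cancel, and the inequality becomes
`β / 8 + 1 ≤ y / (c * β) * ((c * β - β - 2) / 2)`. The lower bound on `α` says exactly that
`4 * (c * β) ≥ 5 * β + 16`, i.e. `(c * β - β - 2) / 2 ≥ β / 8 + 1`; the factor `y / (c * β)` is at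
least `1` because `y ≥ c * β`.
-/

theorem stmt_7 (α β c : ℝ) (hβ : 1 ≤ β) (hα : (5 * β + 16) ^ 2 / (16 * β) ≤ α)
    (hc : c = Real.sqrt (α / β)) :
    ∀ y : ℝ, c * β ≤ y →
      y ^ 2 / (2 * α) + y / 2 ≥
        y ^ 2 / (2 * c ^ 2 * β) + y / (2 * c) + y / (c * β) + c * β / (8 * c) + 1 := by
  intro y hy
  have hβ0 : 0 < β := by linarith
  have hcge : (5 * β + 16) / (4 * β) ≤ c := by
    rw [hc]
    apply Real.le_sqrt_of_sq_le
    rw [le_div_iff₀ hβ0]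
    refine le_trans (le_of_eq ?_) hα
    field_simp
    ring
  have hc0 : 0 < c := lt_of_lt_of_le (by positivity) hcge
  have hcβ : 5 * β + 16 ≤ 4 * (c * β) := by
    rw [div_le_iff₀ (by positivity)] at hcge
    linarith
  have hα0 : 0 < α := lt_of_lt_of_le (by positivity) hα
  have hαc : α = c ^ 2 * β := by
    rw [hc, Real.sq_sqrt (by positivity)]
    field_simp
  have hdiff : y ^ 2 / (2 * α) + y / 2 -
      (y ^ 2 / (2 * c ^ 2 * β) + y / (2 * c) + y / (c * β) + c * β / (8 * c) + 1) =
      y / (c * β) * ((c * β - β - 2) / 2) - (β / 8 + 1) := by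
    rw [hαc]
    field_simp
    ring
  have hone : 1 ≤ y / (c * β) := (one_le_div (by positivity)).2 hy
  have hmul : (c * β - β - 2) / 2 ≤ y / (c * β) * ((c * β - β - 2) / 2) :=
    le_mul_of_one_le_left (by linarith) hone
  linarith
end

section
/- Let n ≥ 3 be an integer and let k be a positive real number with k^(2/n) ≥ 289/36. Then for every integer i with 0 ≤ i ≤ n−3, (25/16)·k^(−2/n) + 10·k^(−(n−i)/n) + 16·k^(−2(n−i−1)/n) ≤ 1. -/
/-!
Put `y = k ^ (-1/n)` and `m = n - i ≥ 3`. The hypothesis says `y ≤ 6/17 < 1`, and the left-hand side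
is `25/16 * y ^ 2 + 10 * y ^ m + 16 * y ^ (2 * (m - 1))`. Since `y < 1`, it is largest for `m = 3`,
where it is increasing in `y` and already below `1` (about `0.88`) at `y = 6/17`.
-/

theorem stmt_12 (n : ℕ) (hn : 3 ≤ n) (k : ℝ) (hk : 0 < k)
    (hk2 : (289 : ℝ) / 36 ≤ k ^ ((2 : ℝ) / n)) :
    ∀ i : ℕ, i ≤ n - 3 →
      25 / 16 * k ^ (-(2 : ℝ) / n) + 10 * k ^ (-(((n : ℝ) - i) / n)) +
        16 * k ^ (-(2 * ((n : ℝ) - i - 1) / n)) ≤ 1 := by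
  intro i hi
  obtain ⟨j, hj⟩ : ∃ j, n = i + (j + 3) := ⟨n - 3 - i, by omega⟩
  have hjR : (n : ℝ) = i + (j + 3) := by exact_mod_cast hj
  obtain ⟨y, hy⟩ : ∃ y, y = k ^ (-(1 : ℝ) / n) := ⟨_, rfl⟩
  have hy0 : 0 < y := hy ▸ Real.rpow_pos_of_pos hk _
  have hpow (m : ℕ) : y ^ m = k ^ (-(m : ℝ) / n) := by
    rw [hy, ← Real.rpow_natCast, ← Real.rpow_mul hk.le]
    congr 1
    ring
  have e1 : k ^ (-(2 : ℝ) / n) = y ^ 2 := by rw [hpow]; norm_num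
  have e2 : k ^ (-(((n : ℝ) - i) / n)) = y ^ (j + 3) := by
    rw [hpow]
    congr 1
    push_cast
    rw [show (n : ℝ) - i = j + 3 by linarith]
    ring
  have e3 : k ^ (-(2 * ((n : ℝ) - i - 1) / n)) = y ^ (2 * (j + 2)) := by
    rw [hpow]
    congr 1
    push_cast
    rw [show (n : ℝ) - i - 1 = j + 2 by linarith]
    ring
  have hinv : y ^ 2 * k ^ ((2 : ℝ) / n) = 1 := by
    rw [← e1, ← Real.rpow_add hk, neg_div, neg_add_cancel, Real.rpow_zero]
  have hy2 : y ^ 2 ≤ 36 / 289 := by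
    have := mul_le_mul_of_nonneg_left hk2 (sq_nonneg y)
    linarith
  have hy1 : y ≤ 6 / 17 := by nlinarith
  have h1 : y ≤ 1 := by linarith
  have b2 : y ^ (j + 3) ≤ y ^ 3 := pow_le_pow_of_le_one hy0.le h1 (by omega)
  have b3 : y ^ (2 * (j + 2)) ≤ y ^ 4 := pow_le_pow_of_le_one hy0.le h1 (by omega)
  have c3 : y ^ 3 ≤ (6 / 17) ^ 3 := pow_le_pow_left₀ hy0.le hy1 3
  have c4 : y ^ 4 ≤ (6 / 17) ^ 4 := pow_le_pow_left₀ hy0.le hy1 4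
  rw [e1, e2, e3]
  norm_num at c3 c4
  linarith
end

section
/- Let n ≥ 2 be an integer, let d ≥ 1 be a real number, and let k be a real number with k ≥ d and k^(2/n) ≥ (25/16)·d + 10·d^(−(n−2)/n) + 16·d^(−2(n−1)/n). Then for every integer i with 0 ≤ i ≤ n−2, (25/16)·k^(−2/n)·d^((i+2)/n) + 10·k^(−(n−i)/n)·d^(−i/n) + 16·k^(−2(n−i−1)/n)·d^(−2(i+1)/n) ≤ 1. -/
/-!
Multiplying the hypothesis by `k ^ (-2/n)` gives exactly the claim for `i = n - 2`. For smaller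
`i`, every summand is at most the corresponding one at `i = n - 2`: the first because `1 ≤ d`, the
other two because they change by the factors `(d / k) ^ ((n - 2 - i) / n)` and
`(d / k) ^ (2 * (n - 2 - i) / n)`, which are at most `1` (`rpow_shift_le`).
-/

/-- Shifting a nonnegative amount `s` of negative exponent from the larger base `k` to the smaller
base `d` does not decrease the product; the ratio is `(d / k) ^ s ≤ 1`. -/
lemma rpow_shift_le {d k : ℝ} (hd : 0 < d) (hkd : d ≤ k) (p q : ℝ) {s : ℝ} (hs : 0 ≤ s) :
    k ^ (-(p + s)) * d ^ (-q) ≤ k ^ (-p) * d ^ (-(q + s)) := by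
  have hk : 0 < k := hd.trans_le hkd
  have h : k ^ (-s) ≤ d ^ (-s) :=
    Real.rpow_le_rpow_of_nonpos hd hkd (neg_nonpos.mpr hs)
  rw [neg_add, neg_add, Real.rpow_add hk, Real.rpow_add hd, mul_assoc, mul_comm (d ^ (-q))]
  gcongr

theorem stmt_13 (n : ℕ) (hn : 2 ≤ n) (d k : ℝ) (hd : 1 ≤ d) (hkd : d ≤ k)
    (hk2 : 25 / 16 * d + 10 * d ^ (-(((n : ℝ) - 2) / n)) + 16 * d ^ (-(2 * ((n : ℝ) - 1) / n))
      ≤ k ^ ((2 : ℝ) / n)) :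
    ∀ i : ℕ, i ≤ n - 2 →
      25 / 16 * k ^ (-(2 : ℝ) / n) * d ^ (((i : ℝ) + 2) / n) +
        10 * k ^ (-(((n : ℝ) - i) / n)) * d ^ (-((i : ℝ) / n)) +
        16 * k ^ (-(2 * ((n : ℝ) - i - 1) / n)) * d ^ (-(2 * ((i : ℝ) + 1) / n)) ≤ 1 := by
  intro i hi
  have hd0 : 0 < d := by linarith
  have hk0 : 0 < k := by linarith
  have hn0 : (0 : ℝ) < n := by exact_mod_cast (by omega : 0 < n)
  have hin : (i : ℝ) + 2 ≤ n := by exact_mod_cast (by omega : i + 2 ≤ n)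
  have hs : 0 ≤ ((n : ℝ) - 2 - i) / n := div_nonneg (by linarith) hn0.le
  rw [neg_div]
  have h1 : d ^ (((i : ℝ) + 2) / n) ≤ d := by
    simpa using Real.rpow_le_rpow_of_exponent_le hd ((div_le_one hn0).mpr hin)
  have h1' := mul_le_mul_of_nonneg_left h1 (Real.rpow_nonneg hk0.le (-((2 : ℝ) / n)))
  have h2 := rpow_shift_le hd0 hkd (2 / n) ((i : ℝ) / n) hs
  have h3 := rpow_shift_le hd0 hkd (2 / n) (2 * ((i : ℝ) + 1) / n) (mul_nonneg zero_le_two hs)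
  rw [show (2 : ℝ) / n + ((n : ℝ) - 2 - i) / n = ((n : ℝ) - i) / n by ring,
    show (i : ℝ) / n + ((n : ℝ) - 2 - i) / n = ((n : ℝ) - 2) / n by ring] at h2
  rw [show (2 : ℝ) / n + 2 * (((n : ℝ) - 2 - i) / n) = 2 * ((n : ℝ) - i - 1) / n by ring,
    show 2 * ((i : ℝ) + 1) / n + 2 * (((n : ℝ) - 2 - i) / n) = 2 * ((n : ℝ) - 1) / n by ring] at h3
  have h4 := mul_le_mul_of_nonneg_left hk2 (Real.rpow_nonneg hk0.le (-((2 : ℝ) / n)))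
  rw [← Real.rpow_add hk0, neg_add_cancel, Real.rpow_zero] at h4
  linarith
end
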